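/- For every integer β with 3 ≤ β ≤ 7 and every nonnegative integer N, the equation x² + y² + z² + β(3t² − 2t) = N has an integer solution (x, y, z, t) ∈ ℤ⁴. That is, the quaternary mixed sums x²+y²+z²+βP₈(t) for 3 ≤ β ≤ 7 are universal. -/

import Mathlib

/-!
Legendre's three-square theorem says that a natural number not of the form `4 ^ a * (8 * b + 7)` is
a sum of three squares. It is proved here following Dirichlet: if `-b` is a square modulo
`b * n - 1`, then `n` is a value of a positive definite integral ternary form of determinant `1`,
and by reduction theory every such form is equivalent to `x ^ 2 + y ^ 2 + z ^ 2`. A suitable `b`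
comes from a prime in an arithmetic progression together with quadratic reciprocity.

Thus a number `N` that is not a sum of three squares is so restricted modulo `8`, `16` or `32` that,
for `β ≠ 3`, subtracting `β` or `5 * β`, the values of `β * P₈` at `1` and `-1`, leaves a sum of
three squares. For `β = 3` no finite set of values of `t` suffices for all `N`, as the numbers
`N = 4 ^ k - 1` with large `k` show. But `3 * P₈ t + 1 = (3 * t - 1) ^ 2`, so what is needed is that
`N + 1` is a sum of four squares, one of which is prime to `3`.
-/

/-- The sums of three integer squares. -/
def IsSumThreeSq (n : ℤ) : Prop := ∃ x y z : ℤ, x ^ 2 + y ^ 2 + z ^ 2 = n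

/-- The integers of the form `x² + y² + z² + β P₈(t)`. -/
def IsMixedSum (β n : ℤ) : Prop :=
  ∃ x y z t : ℤ, x ^ 2 + y ^ 2 + z ^ 2 + β * (3 * t ^ 2 - 2 * t) = n

/-! ### Reduction of ternary quadratic forms -/

theorem exists_two_mul_abs_add_mul_le (u : ℤ) {m : ℤ} (hm : 0 < m) :
    ∃ k : ℤ, 2 * |u + k * m| ≤ m := by
  lift m to ℕ using hm.le
  refine ⟨-u.bdiv m, ?_⟩
  have hbmod : u + -u.bdiv m * m = u.bmod m := by linarith [u.bmod_add_bdiv' m]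
  have hlower := Int.le_bmod (x := u) (m := m) (by omega)
  have hupper := Int.bmod_le (x := u) (m := m) (by omega)
  rw [hbmod]
  rcases abs_cases (u.bmod m) with ⟨habs, _⟩ | ⟨habs, _⟩ <;> omega

theorem three_mul_sq_le_four_mul_sub_sq {a b f : ℤ} (hf : 2 * |f| ≤ a) (hab : a ≤ b) :
    3 * a ^ 2 ≤ 4 * (a * b - f ^ 2) := by
  have hfa : (2 * f) ^ 2 ≤ a ^ 2 := sq_le_sq' (by grind) (by grind)
  have ha : 0 ≤ a := (by positivity : 0 ≤ 2 * |f|).trans hf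
  nlinarith [mul_le_mul_of_nonneg_left hab ha]

theorem eq_one_and_eq_one_of_three_mul_sq_le {a b : ℤ} (ha : 0 < a) (hb : 0 < b)
    (hab : 3 * a ^ 2 ≤ 4 * b) (hba : 3 * b ^ 2 ≤ 4 * a) : a = 1 ∧ b = 1 := by
  have ha' : a < 2 := by nlinarith
  have hb' : b < 2 := by nlinarith
  omega

/-- The integral ternary quadratic form with Gram matrix `!![a, f, e; f, b, d; e, d, c]`. -/
structure TernaryForm where
  (a b c d e f : ℤ)

namespace TernaryForm

variable {Q : TernaryForm}

/-- The value of the form at an integer vector. -/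
def eval (Q : TernaryForm) (x y z : ℤ) : ℤ :=
  Q.a * x ^ 2 + Q.b * y ^ 2 + Q.c * z ^ 2 + 2 * Q.d * y * z + 2 * Q.e * x * z + 2 * Q.f * x * y

/-- The integers represented by the form. -/
def values (Q : TernaryForm) : Set ℤ := {n | ∃ x y z : ℤ, Q.eval x y z = n}

/-- The determinant of the Gram matrix. -/
def det (Q : TernaryForm) : ℤ :=
  Q.a * Q.b * Q.c + 2 * Q.d * Q.e * Q.f - Q.a * Q.d ^ 2 - Q.b * Q.e ^ 2 - Q.c * Q.f ^ 2

/-- The principal minor of the Gram matrix on the variables `x`, `y`. -/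
def minorXY (Q : TernaryForm) : ℤ := Q.a * Q.b - Q.f ^ 2

/-- The principal minor of the Gram matrix on the variables `x`, `z`. -/
def minorXZ (Q : TernaryForm) : ℤ := Q.a * Q.c - Q.e ^ 2

/-- The minor of the Gram matrix on the rows `x`, `y` and the columns `x`, `z`. -/
def minorXYXZ (Q : TernaryForm) : ℤ := Q.a * Q.d - Q.e * Q.f

/-- Positive definiteness, expressed by Sylvester's criterion. -/
structure PosDef (Q : TernaryForm) : Prop where
  a_pos : 0 < Q.a
  minorXY_pos : 0 < Q.minorXY
  det_pos : 0 < Q.det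

/-- The conditions of Lagrange reducedness on the off-diagonal coefficients of the binary forms
`(a, f, b)` and `(minorXY, minorXYXZ, minorXZ)`. -/
structure IsSizeReduced (Q : TernaryForm) : Prop where
  two_mul_abs_f_le : 2 * |Q.f| ≤ Q.a
  two_mul_abs_minorXYXZ_le : 2 * |Q.minorXYXZ| ≤ Q.minorXY

/-- Both binary forms `(a, f, b)` and `(minorXY, minorXYXZ, minorXZ)` are Lagrange reduced. -/
structure IsReduced (Q : TernaryForm) : Prop extends IsSizeReduced Q where
  a_le_b : Q.a ≤ Q.b
  minorXY_le_minorXZ : Q.minorXY ≤ Q.minorXZ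

theorem minorXY_mul_minorXZ_sub_sq (Q : TernaryForm) :
    Q.minorXY * Q.minorXZ - Q.minorXYXZ ^ 2 = Q.a * Q.det := by
  simp only [minorXY, minorXZ, minorXYXZ, det]
  ring

theorem PosDef.b_pos (hQ : Q.PosDef) : 0 < Q.b := by
  have hab : 0 < Q.a * Q.b := by
    have hminor := hQ.minorXY_pos
    rw [minorXY] at hminor
    nlinarith [sq_nonneg Q.f]
  exact pos_of_mul_pos_right hab hQ.a_pos.le

theorem PosDef.minorXZ_pos (hQ : Q.PosDef) : 0 < Q.minorXZ := by
  have hmul : 0 < Q.minorXY * Q.minorXZ := by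
    nlinarith [Q.minorXY_mul_minorXZ_sub_sq, mul_pos hQ.a_pos hQ.det_pos, sq_nonneg Q.minorXYXZ]
  exact pos_of_mul_pos_right hmul hQ.minorXY_pos.le

/-- The form with the variables `x` and `y` exchanged. -/
def swapXY (Q : TernaryForm) : TernaryForm := ⟨Q.b, Q.a, Q.c, Q.e, Q.d, Q.f⟩

/-- The form with the variables `y` and `z` exchanged. -/
def swapYZ (Q : TernaryForm) : TernaryForm := ⟨Q.a, Q.c, Q.b, Q.d, Q.f, Q.e⟩

/-- The form `Q (x + k y, y, z)`. -/
def shearXY (Q : TernaryForm) (k : ℤ) : TernaryForm :=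
  ⟨Q.a, Q.b + 2 * k * Q.f + k ^ 2 * Q.a, Q.c, Q.d + k * Q.e, Q.e, Q.f + k * Q.a⟩

/-- The form `Q (x, y + j z, z)`. -/
def shearYZ (Q : TernaryForm) (j : ℤ) : TernaryForm :=
  ⟨Q.a, Q.b, Q.c + 2 * j * Q.d + j ^ 2 * Q.b, Q.d + j * Q.b, Q.e + j * Q.f, Q.f⟩

theorem det_swapXY (Q : TernaryForm) : Q.swapXY.det = Q.det := by
  simp only [det, swapXY]; ring

theorem det_swapYZ (Q : TernaryForm) : Q.swapYZ.det = Q.det := by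
  simp only [det, swapYZ]; ring

theorem det_shearXY (Q : TernaryForm) (k : ℤ) : (Q.shearXY k).det = Q.det := by
  simp only [det, shearXY]; ring

theorem det_shearYZ (Q : TernaryForm) (j : ℤ) : (Q.shearYZ j).det = Q.det := by
  simp only [det, shearYZ]; ring

theorem minorXY_swapXY (Q : TernaryForm) : Q.swapXY.minorXY = Q.minorXY := by
  simp only [minorXY, swapXY]; ring

theorem minorXY_shearXY (Q : TernaryForm) (k : ℤ) : (Q.shearXY k).minorXY = Q.minorXY := by
  simp only [minorXY, shearXY]; ring

theorem minorXYXZ_shearYZ (Q : TernaryForm) (j : ℤ) :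
    (Q.shearYZ j).minorXYXZ = Q.minorXYXZ + j * Q.minorXY := by
  simp only [minorXY, minorXYXZ, shearYZ]; ring

theorem values_subset_swapXY (Q : TernaryForm) : Q.values ⊆ Q.swapXY.values := by
  rintro _ ⟨x, y, z, rfl⟩
  exact ⟨y, x, z, by simp only [eval, swapXY]; ring⟩

theorem values_subset_swapYZ (Q : TernaryForm) : Q.values ⊆ Q.swapYZ.values := by
  rintro _ ⟨x, y, z, rfl⟩
  exact ⟨x, z, y, by simp only [eval, swapYZ]; ring⟩

theorem values_subset_shearXY (Q : TernaryForm) (k : ℤ) : Q.values ⊆ (Q.shearXY k).values := by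
  rintro _ ⟨x, y, z, rfl⟩
  exact ⟨x - k * y, y, z, by simp only [eval, shearXY]; ring⟩

theorem values_subset_shearYZ (Q : TernaryForm) (j : ℤ) : Q.values ⊆ (Q.shearYZ j).values := by
  rintro _ ⟨x, y, z, rfl⟩
  exact ⟨x, y - j * z, z, by simp only [eval, shearYZ]; ring⟩

theorem PosDef.swapXY (hQ : Q.PosDef) : Q.swapXY.PosDef :=
  ⟨hQ.b_pos, by rw [minorXY_swapXY]; exact hQ.minorXY_pos, by rw [det_swapXY]; exact hQ.det_pos⟩

theorem PosDef.swapYZ (hQ : Q.PosDef) : Q.swapYZ.PosDef :=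
  ⟨hQ.a_pos, hQ.minorXZ_pos, by rw [det_swapYZ]; exact hQ.det_pos⟩

theorem exists_isSizeReduced (ha : 0 < Q.a) (hminor : 0 < Q.minorXY) :
    ∃ R : TernaryForm, R.IsSizeReduced ∧ R.a = Q.a ∧ R.minorXY = Q.minorXY ∧ R.det = Q.det ∧
      Q.values ⊆ R.values := by
  obtain ⟨k, hk⟩ := exists_two_mul_abs_add_mul_le Q.f ha
  obtain ⟨j, hj⟩ := exists_two_mul_abs_add_mul_le (Q.shearXY k).minorXYXZ hminor
  have hminor_eq : ((Q.shearXY k).shearYZ j).minorXY = Q.minorXY := Q.minorXY_shearXY k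
  refine ⟨(Q.shearXY k).shearYZ j, ⟨hk, ?_⟩, rfl, hminor_eq, ?_, ?_⟩
  · rwa [hminor_eq, minorXYXZ_shearYZ, minorXY_shearXY]
  · rw [det_shearYZ, det_shearXY]
  · exact (Q.values_subset_shearXY k).trans (values_subset_shearYZ _ j)

theorem PosDef.exists_isReduced {Q : TernaryForm} (hQ : Q.PosDef) :
    ∃ R : TernaryForm, R.PosDef ∧ R.IsReduced ∧ R.det = Q.det ∧ Q.values ⊆ R.values := by
  obtain ⟨R, hRred, hRa, hRminor, hRdet, hQR⟩ := exists_isSizeReduced hQ.a_pos hQ.minorXY_pos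
  have hR : R.PosDef :=
    ⟨hRa ▸ hQ.a_pos, hRminor ▸ hQ.minorXY_pos, hRdet ▸ hQ.det_pos⟩
  by_cases hba : R.b < R.a
  · obtain ⟨S, hS, hSred, hSdet, hRS⟩ := hR.swapXY.exists_isReduced
    exact ⟨S, hS, hSred, by rw [hSdet, det_swapXY, hRdet],
      hQR.trans (R.values_subset_swapXY.trans hRS)⟩
  by_cases hminor : R.minorXZ < R.minorXY
  · obtain ⟨S, hS, hSred, hSdet, hRS⟩ := hR.swapYZ.exists_isReduced
    exact ⟨S, hS, hSred, by rw [hSdet, det_swapYZ, hRdet],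
      hQR.trans (R.values_subset_swapYZ.trans hRS)⟩
  exact ⟨R, hR, ⟨hRred, not_lt.1 hba, not_lt.1 hminor⟩, hRdet, hQR⟩
termination_by (Q.a.toNat, Q.minorXY.toNat)
decreasing_by
  · exact Prod.Lex.left _ _ ((Int.toNat_lt_toNat hQ.a_pos).2 (hRa ▸ hba))
  · rw [show R.swapYZ.a = Q.a from hRa]
    exact Prod.Lex.right _ ((Int.toNat_lt_toNat hQ.minorXY_pos).2 (hRminor ▸ hminor))

theorem IsReduced.a_eq_one_and_minorXY_eq_one (hred : Q.IsReduced) (hQ : Q.PosDef)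
    (hdet : Q.det = 1) : Q.a = 1 ∧ Q.minorXY = 1 := by
  refine eq_one_and_eq_one_of_three_mul_sq_le hQ.a_pos hQ.minorXY_pos
    (three_mul_sq_le_four_mul_sub_sq hred.two_mul_abs_f_le hred.a_le_b) ?_
  have h := three_mul_sq_le_four_mul_sub_sq hred.two_mul_abs_minorXYXZ_le hred.minorXY_le_minorXZ
  rwa [minorXY_mul_minorXZ_sub_sq, hdet, mul_one] at h

theorem IsReduced.isSumThreeSq_of_mem_values (hred : Q.IsReduced) (hQ : Q.PosDef)
    (hdet : Q.det = 1) {n : ℤ} (hn : n ∈ Q.values) : IsSumThreeSq n := by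
  obtain ⟨x, y, z, rfl⟩ := hn
  obtain ⟨ha, hminor⟩ := hred.a_eq_one_and_minorXY_eq_one hQ hdet
  have hf : Q.f = 0 := by have := hred.two_mul_abs_f_le; grind
  have hmixed : Q.minorXYXZ = 0 := by have := hred.two_mul_abs_minorXYXZ_le; grind
  have hb : Q.b = 1 := by simpa [minorXY, ha, hf] using hminor
  have hd : Q.d = 0 := by simpa [minorXYXZ, ha, hf] using hmixed
  have hc : Q.c = 1 + Q.e ^ 2 := by
    rw [det, ha, hb, hd, hf] at hdet
    linarith
  refine ⟨x + Q.e * z, y, z, ?_⟩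
  rw [eval, ha, hb, hc, hd, hf]
  ring

theorem PosDef.isSumThreeSq_of_mem_values (hQ : Q.PosDef) (hdet : Q.det = 1) {n : ℤ}
    (hn : n ∈ Q.values) : IsSumThreeSq n := by
  obtain ⟨R, hR, hred, hRdet, hQR⟩ := hQ.exists_isReduced
  exact hred.isSumThreeSq_of_mem_values hR (hRdet.trans hdet) (hQR hn)

end TernaryForm

theorem isSumThreeSq_of_dvd_sq_add {n b r : ℤ} (hb : 0 < b) (hbn : 0 < b * n - 1)
    (hdvd : b * n - 1 ∣ r ^ 2 + b) : IsSumThreeSq n := by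
  obtain ⟨s, hs⟩ := hdvd
  have hs_pos : 0 < s := pos_of_mul_pos_right (hs ▸ by positivity) hbn.le
  let Q : TernaryForm := ⟨s, b * n - 1, n, 0, 1, r⟩
  have hminor : Q.minorXY = b := by simp only [TernaryForm.minorXY, Q]; linarith
  have hdet : Q.det = 1 := by simp only [TernaryForm.det, Q]; linear_combination (-n) * hs
  have hQ : Q.PosDef := ⟨hs_pos, hminor ▸ hb, hdet ▸ one_pos⟩
  exact hQ.isSumThreeSq_of_mem_values hdet ⟨0, 0, 1, by simp [TernaryForm.eval, Q]⟩

/-! ### The three-square theorem -/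

theorem exists_prime_mod_four_eq_and_mul_add_one_eq {k q c n : ℕ} (hq : Odd q)
    (h : k * q + 1 = c * n) :
    ∃ p v : ℕ, p.Prime ∧ p % 4 = q % 4 ∧ k * p + 1 = (4 * k * v + c) * n := by
  have hn : n ≠ 0 := by rintro rfl; simp at h
  have hqn : q.Coprime n := by
    refine Nat.isCoprime_iff_coprime.1 ⟨-k, c, ?_⟩
    have : (k : ℤ) * q + 1 = c * n := mod_cast h
    linarith
  have hq4 : q.Coprime 4 := (Nat.coprime_two_right.2 hq).pow_right 2
  obtain ⟨p, hqp, hp, hmod⟩ :=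
    Nat.forall_exists_prime_gt_and_modEq q (by positivity) (hq4.mul_right hqn)
  obtain ⟨v, hv⟩ := (Nat.modEq_iff_dvd' hqp.le).1 hmod.symm
  have hpv : p = 4 * n * v + q := by omega
  exact ⟨p, v, hp, hmod.of_mul_right n, by rw [hpv]; linear_combination h⟩

theorem jacobiSym_neg_natCast_eq_swap {b p : ℕ} (hb : Odd b) (hp : Odd p)
    (h : p % 4 = 1 ∨ b % 4 = 3) : jacobiSym (-b) p = jacobiSym p b := by
  rw [jacobiSym.neg _ hp]
  rcases Nat.odd_mod_four_iff.1 (Nat.odd_iff.1 hp) with hp1 | hp3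
  · rw [ZMod.χ₄_nat_one_mod_four hp1, one_mul,
      jacobiSym.quadratic_reciprocity_one_mod_four' hb hp1]
  · rw [ZMod.χ₄_nat_three_mod_four hp3,
      jacobiSym.quadratic_reciprocity_three_mod_four (by omega) hp3, neg_one_mul, neg_neg]

theorem jacobiSym_eq_one_of_dvd_mul_add_one {a k : ℤ} {b : ℕ} (hk : jacobiSym (-k) b = 1)
    (hdvd : (b : ℤ) ∣ k * a + 1) : jacobiSym a b = 1 := by
  have hmod : -k * a ≡ 1 [ZMOD b] := Int.modEq_iff_dvd.2 (by convert hdvd using 1; ring)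
  calc jacobiSym a b = jacobiSym (-k * a) b := by rw [jacobiSym.mul_left, hk, one_mul]
    _ = 1 := by rw [jacobiSym.mod_left' hmod, jacobiSym.one_left]

theorem exists_two_mul_prime_dvd_sq_add {p : ℕ} (hp : p.Prime) (hp_odd : Odd p) {b : ℤ}
    (hb : Odd b) (hJ : jacobiSym (-b) p = 1) : ∃ r : ℤ, 2 * (p : ℤ) ∣ r ^ 2 + b := by
  have := Fact.mk hp
  obtain ⟨y, hy⟩ := ZMod.isSquare_of_jacobiSym_eq_one hJ
  obtain ⟨r, rfl⟩ := ZMod.intCast_surjective y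
  have hr : (p : ℤ) ∣ r ^ 2 + b := by
    rw [← ZMod.intCast_zmod_eq_zero_iff_dvd]
    push_cast at hy ⊢
    linear_combination -hy
  have hp_odd' : Odd (p : ℤ) := mod_cast hp_odd
  obtain ⟨r', hr'_odd, hr'⟩ : ∃ r' : ℤ, Odd r' ∧ (p : ℤ) ∣ r' ^ 2 + b := by
    rcases r.even_or_odd with hr_even | hr_odd
    · refine ⟨r + p, hr_even.add_odd hp_odd', ?_⟩
      have : (r + p) ^ 2 + b = (r ^ 2 + b) + p * (2 * r + p) := by ring
      exact this ▸ dvd_add hr (dvd_mul_right _ _)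
    · exact ⟨r, hr_odd, hr⟩
  have hcop : IsCoprime (2 : ℤ) p := Nat.isCoprime_iff_coprime.2 (Nat.coprime_two_left.2 hp_odd)
  exact ⟨r', hcop.mul_dvd (hr'_odd.pow.add_odd hb).two_dvd hr'⟩

theorem isSumThreeSq_of_mul_add_one_eq {k q c n : ℕ} (hk : k ∣ 2) (hq : Odd q) (hc : Odd c)
    (hqc : q % 4 = 1 ∨ c % 4 = 3) (hJ : jacobiSym (-k) c = 1) (h : k * q + 1 = c * n) :
    IsSumThreeSq n := by
  obtain ⟨p, v, hp, hpq, hpn⟩ := exists_prime_mod_four_eq_and_mul_add_one_eq hq h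
  set b := 4 * k * v + c with hb_def
  have hbc : b % 4 = c % 4 := by simp [hb_def, mul_assoc]
  have hb : Odd b := by rw [Nat.odd_iff] at hc ⊢; omega
  have hp_odd : Odd p := by rw [Nat.odd_iff] at hq ⊢; omega
  have hJb : jacobiSym (-k) b = 1 := by
    rw [← hJ, jacobiSym.mod_right _ hb, jacobiSym.mod_right _ hc]
    simp [hb_def]
  have hpn' : (k : ℤ) * p + 1 = b * n := mod_cast hpn
  have hJp : jacobiSym (-b) p = 1 := by
    rw [jacobiSym_neg_natCast_eq_swap hb hp_odd (by omega)]
    exact jacobiSym_eq_one_of_dvd_mul_add_one hJb ⟨n, hpn'⟩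
  obtain ⟨r, hr⟩ := exists_two_mul_prime_dvd_sq_add hp hp_odd (mod_cast hb) hJp
  have hkp : (b : ℤ) * n - 1 = k * p := by linarith
  have hkp_pos : 0 < (k : ℤ) * p := by
    exact_mod_cast Nat.mul_pos (Nat.pos_of_dvd_of_pos hk two_pos) hp.pos
  have hkp_dvd : (k : ℤ) * p ∣ r ^ 2 + b := (mul_dvd_mul_right (mod_cast hk) _).trans hr
  exact isSumThreeSq_of_dvd_sq_add (mod_cast hb.pos) (hkp ▸ hkp_pos) (hkp ▸ hkp_dvd)

theorem isSumThreeSq_of_emod {n : ℤ} (hn : 0 ≤ n) (h4 : n % 4 ≠ 0) (h8 : n % 8 ≠ 7) :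
    IsSumThreeSq n := by
  lift n to ℕ using hn
  have hJ : jacobiSym (-2) 3 = 1 := by norm_num
  have hcases : n % 4 = 2 ∨ n % 8 = 1 ∨ n % 8 = 3 ∨ n % 8 = 5 := by omega
  rcases hcases with h | h | h | h
  · exact isSumThreeSq_of_mul_add_one_eq (k := 1) (q := n - 1) (c := 1) (by simp)
      (Nat.odd_iff.2 (by omega)) odd_one (by omega) (by simp) (by omega)
  · exact isSumThreeSq_of_mul_add_one_eq (k := 2) (q := 3 * n / 2) (c := 3) (by simp)
      (Nat.odd_iff.2 (by omega)) (by decide) (by omega) hJ (by omega)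
  · exact isSumThreeSq_of_mul_add_one_eq (k := 2) (q := n / 2) (c := 1) (by simp)
      (Nat.odd_iff.2 (by omega)) odd_one (by omega) (by simp) (by omega)
  · exact isSumThreeSq_of_mul_add_one_eq (k := 2) (q := 3 * n / 2) (c := 3) (by simp)
      (Nat.odd_iff.2 (by omega)) (by decide) (by omega) hJ (by omega)

theorem IsSumThreeSq.four_mul {n : ℤ} (h : IsSumThreeSq n) : IsSumThreeSq (4 * n) := by
  obtain ⟨x, y, z, h⟩ := h
  exact ⟨2 * x, 2 * y, 2 * z, by linear_combination 4 * h⟩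

theorem isSumThreeSq_of_forall_ne_four_pow_mul (n : ℕ) (h : ∀ a b : ℕ, n ≠ 4 ^ a * (8 * b + 7)) :
    IsSumThreeSq n := by
  induction n using Nat.strong_induction_on with
  | _ n ih =>
  by_cases h4 : n % 4 = 0
  · obtain ⟨m, rfl⟩ := Nat.dvd_of_mod_eq_zero h4
    rcases Nat.eq_zero_or_pos m with rfl | hm
    · exact ⟨0, 0, 0, by simp⟩
    · push_cast
      refine (ih m (by omega) fun a b hab => h (a + 1) b ?_).four_mul
      rw [hab]
      ring
  · have h8 : n % 8 ≠ 7 := fun h7 => h 0 (n / 8) (by omega)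
    exact isSumThreeSq_of_emod (by omega) (by omega) (by omega)

theorem emod_of_not_isSumThreeSq {n : ℤ} (hn : 0 ≤ n) (h : ¬ IsSumThreeSq n) :
    n % 8 = 7 ∨ n % 32 = 28 ∨ n % 16 = 0 ∧ 112 ≤ n := by
  lift n to ℕ using hn
  obtain ⟨a, b, rfl⟩ : ∃ a b : ℕ, n = 4 ^ a * (8 * b + 7) := by
    by_contra! hne
    exact h (isSumThreeSq_of_forall_ne_four_pow_mul n hne)
  match a with
  | 0 => omega
  | 1 => omega
  | a + 2 =>
    have hpow : 4 ^ (a + 2) * (8 * b + 7) = 16 * (4 ^ a * (8 * b + 7)) := by ring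
    have hle : 7 ≤ 4 ^ a * (8 * b + 7) := by nlinarith [Nat.one_le_pow a 4 (by norm_num)]
    omega

/-! ### Four squares, one of them prime to `3` -/

theorem exists_four_sq_nine_mul_of_not_three_dvd {a b c d n : ℤ}
    (h : a ^ 2 + b ^ 2 + c ^ 2 + d ^ 2 = n) (ha : ¬ 3 ∣ a) :
    ∃ a' b' c' d' : ℤ, a' ^ 2 + b' ^ 2 + c' ^ 2 + d' ^ 2 = 9 * n ∧ ¬ 3 ∣ a' := by
  -- `3` times the reflection in `(1, -1, -1)`, applied to `(a, b, c)` or to `(-a, b, c)`.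
  by_cases hdvd : 3 ∣ a + 2 * b + 2 * c
  · exact ⟨-a + 2 * b + 2 * c, -2 * a + b - 2 * c, -2 * a - 2 * b + c, 3 * d,
      by linear_combination 9 * h, by omega⟩
  · exact ⟨a + 2 * b + 2 * c, 2 * a + b - 2 * c, 2 * a - 2 * b + c, 3 * d,
      by linear_combination 9 * h, hdvd⟩

theorem exists_four_sq_not_three_dvd (n : ℕ) (hn : 0 < n) :
    ∃ a b c d : ℤ, a ^ 2 + b ^ 2 + c ^ 2 + d ^ 2 = n ∧ ¬ 3 ∣ a := by
  induction n using Nat.strong_induction_on with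
  | _ n ih =>
  obtain ⟨a, b, c, d, h⟩ : ∃ a b c d : ℤ, a ^ 2 + b ^ 2 + c ^ 2 + d ^ 2 = n := by
    obtain ⟨a, b, c, d, h⟩ := Nat.sum_four_squares n
    exact ⟨a, b, c, d, mod_cast h⟩
  by_cases ha : 3 ∣ a
  case neg => exact ⟨a, b, c, d, h, ha⟩
  by_cases hb : 3 ∣ b
  case neg => exact ⟨b, a, c, d, by linarith, hb⟩
  by_cases hc : 3 ∣ c
  case neg => exact ⟨c, b, a, d, by linarith, hc⟩
  by_cases hd : 3 ∣ d
  case neg => exact ⟨d, b, c, a, by linarith, hd⟩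
  have hdvd : (3 ^ 2 : ℤ) ∣ n := by
    have hsq {s : ℤ} (hs : 3 ∣ s) : 3 ^ 2 ∣ s ^ 2 := pow_dvd_pow_of_dvd hs 2
    exact h ▸ (((hsq ha).add (hsq hb)).add (hsq hc)).add (hsq hd)
  obtain ⟨m, rfl⟩ : 9 ∣ n := mod_cast hdvd
  obtain ⟨a', b', c', d', hm, ha'⟩ := ih m (by omega) (by omega)
  exact_mod_cast exists_four_sq_nine_mul_of_not_three_dvd hm ha'

/-! ### Mixed sums -/

theorem IsMixedSum.of_isSumThreeSq_sub {β n : ℤ} (t : ℤ)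
    (h : IsSumThreeSq (n - β * (3 * t ^ 2 - 2 * t))) : IsMixedSum β n := by
  obtain ⟨x, y, z, h⟩ := h
  exact ⟨x, y, z, t, by linarith⟩

theorem IsMixedSum.of_isSumThreeSq {β n : ℤ} (h : IsSumThreeSq n) : IsMixedSum β n :=
  .of_isSumThreeSq_sub 0 (by simpa using h)

theorem IsMixedSum.of_isSumThreeSq_sub_self {β n : ℤ} (h : IsSumThreeSq (n - β)) :
    IsMixedSum β n :=
  .of_isSumThreeSq_sub 1 (by convert h using 1; ring)

theorem IsMixedSum.of_isSumThreeSq_sub_five_mul {β n : ℤ} (h : IsSumThreeSq (n - 5 * β)) :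
    IsMixedSum β n :=
  .of_isSumThreeSq_sub (-1) (by convert h using 1; ring)

theorem IsMixedSum.four_mul {β n : ℤ} (h : IsMixedSum β n) : IsMixedSum (4 * β) (4 * n) := by
  obtain ⟨x, y, z, t, h⟩ := h
  exact ⟨2 * x, 2 * y, 2 * z, t, by linear_combination 4 * h⟩

theorem isMixedSum_one {n : ℤ} (hn : 0 ≤ n) : IsMixedSum 1 n := by
  by_cases hsq : IsSumThreeSq n
  · exact .of_isSumThreeSq hsq
  rcases emod_of_not_isSumThreeSq hn hsq with h | h | h
  · exact .of_isSumThreeSq_sub_self (isSumThreeSq_of_emod (by omega) (by omega) (by omega))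
  · exact .of_isSumThreeSq_sub_self (isSumThreeSq_of_emod (by omega) (by omega) (by omega))
  · exact .of_isSumThreeSq_sub_five_mul (isSumThreeSq_of_emod (by omega) (by omega) (by omega))

theorem isMixedSum_two {n : ℤ} (hn : 0 ≤ n) : IsMixedSum 2 n := by
  by_cases hsq : IsSumThreeSq n
  · exact .of_isSumThreeSq hsq
  have h := emod_of_not_isSumThreeSq hn hsq
  exact .of_isSumThreeSq_sub_self (isSumThreeSq_of_emod (by omega) (by omega) (by omega))

theorem isMixedSum_three {n : ℤ} (hn : 0 ≤ n) : IsMixedSum 3 n := by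
  lift n to ℕ using hn
  obtain ⟨s, x, y, z, h, hs⟩ := exists_four_sq_not_three_dvd (n + 1) n.succ_pos
  push_cast at h
  have hcases : s % 3 = 2 ∨ s % 3 = 1 := by omega
  rcases hcases with hs | hs
  · obtain ⟨t, rfl⟩ : ∃ t, s = 3 * t - 1 := ⟨s / 3 + 1, by omega⟩
    exact ⟨x, y, z, t, by linear_combination h⟩
  · obtain ⟨t, rfl⟩ : ∃ t, s = -(3 * t - 1) := ⟨-(s / 3), by omega⟩
    exact ⟨x, y, z, t, by linear_combination h⟩

theorem isMixedSum_four {n : ℤ} (hn : 0 ≤ n) : IsMixedSum 4 n := by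
  by_cases hsq : IsSumThreeSq n
  · exact .of_isSumThreeSq hsq
  by_cases h4 : 4 ∣ n
  · obtain ⟨m, rfl⟩ := h4
    exact (isMixedSum_one (by omega)).four_mul
  · have h := emod_of_not_isSumThreeSq hn hsq
    exact .of_isSumThreeSq_sub_self (isSumThreeSq_of_emod (by omega) (by omega) (by omega))

theorem isMixedSum_five {n : ℤ} (hn : 0 ≤ n) : IsMixedSum 5 n := by
  by_cases hsq : IsSumThreeSq n
  · exact .of_isSumThreeSq hsq
  rcases emod_of_not_isSumThreeSq hn hsq with h | h | h
  · exact .of_isSumThreeSq_sub_self (isSumThreeSq_of_emod (by omega) (by omega) (by omega))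
  · exact .of_isSumThreeSq_sub_five_mul (isSumThreeSq_of_emod (by omega) (by omega) (by omega))
  · exact .of_isSumThreeSq_sub_self (isSumThreeSq_of_emod (by omega) (by omega) (by omega))

theorem isMixedSum_six {n : ℤ} (hn : 0 ≤ n) : IsMixedSum 6 n := by
  by_cases hsq : IsSumThreeSq n
  · exact .of_isSumThreeSq hsq
  have h := emod_of_not_isSumThreeSq hn hsq
  exact .of_isSumThreeSq_sub_self (isSumThreeSq_of_emod (by omega) (by omega) (by omega))

theorem isMixedSum_seven {n : ℤ} (hn : 0 ≤ n) : IsMixedSum 7 n := by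
  by_cases hsq : IsSumThreeSq n
  · exact .of_isSumThreeSq hsq
  have h := emod_of_not_isSumThreeSq hn hsq
  by_cases hsq' : IsSumThreeSq (n - 7)
  · exact .of_isSumThreeSq_sub_self hsq'
  have h' := emod_of_not_isSumThreeSq (by omega) hsq'
  obtain ⟨m, hm⟩ : ∃ m, n - 5 * 7 = 4 * m := ⟨(n - 5 * 7) / 4, by omega⟩
  exact .of_isSumThreeSq_sub_five_mul
    (hm ▸ (isSumThreeSq_of_emod (by omega) (by omega) (by omega)).four_mul)

theorem universal_x2_y2_z2_betaP8_general {β : ℤ} (hβ : 1 ≤ β) (hβ' : β ≤ 7) {N : ℤ}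
    (hN : 0 ≤ N) :
    ∃ x y z t : ℤ, x ^ 2 + y ^ 2 + z ^ 2 + β * (3 * t ^ 2 - 2 * t) = N := by
  interval_cases β
  exacts [isMixedSum_one hN, isMixedSum_two hN, isMixedSum_three hN, isMixedSum_four hN,
    isMixedSum_five hN, isMixedSum_six hN, isMixedSum_seven hN]

theorem universal_x2_y2_z2_betaP8 :
    ∀ β : ℤ, 3 ≤ β → β ≤ 7 → ∀ N : ℤ, 0 ≤ N →
      ∃ x y z t : ℤ,
        x ^ 2 + y ^ 2 + z ^ 2 + β * (3 * t ^ 2 - 2 * t) = N := by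
  intro β h3 h7 N hN
  exact universal_x2_y2_z2_betaP8_general (by omega) h7 hN
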